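/- arXiv:2202.03279 — 3 statements merged into one kernel-verified Lean document; each statement's English description precedes it below -/
import Mathlib

section
/- Let N ≥ 1, m > k ≥ 1, and let a = t₀ < t₁ < … < t_n = b be a partition with h_j = t_j − t_{j−1}. Let p₀,…,p_{N−1} be a basis of the polynomials of degree ≤ N−1 on [0,1], p̄₀ = 1 and p̄ᵢ(τ) = ∫₀^τ p_{i−1}(σ)dσ. For a coefficient vector c = (c_{jκl}), define the piecewise polynomial function x = ℛc : [a,b) → ℝ^m by: for t ∈ [t_{j−1},t_j), x_κ(t) = Σ_{l=0}^{N} c_{jκl} h_j p̄_l((t−t_{j−1})/h_j) for κ = 1,…,k, and x_κ(t) = Σ_{l=0}^{N−1} c_{jκl} p_l((t−t_{j−1})/h_j) for κ = k+1,…,m. Let (σᵢ,γᵢ)_{i=1..N} be a quadrature with positive weights exact for degree 2N−2 and (σ̄ᵢ,γ̄ᵢ)_{i=1..N+1} a quadrature with positive weights exact for degree 2N; define V_{iα} = p_{α−1}(σᵢ), V̄_{iα} = p̄_{α−1}(σ̄ᵢ), V̊_{iα} = p̄′_{α−1}(σ̄ᵢ), Γ = diag(γᵢ^{1/2}), Γ̄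 = diag(γ̄ᵢ^{1/2}), U_j = blockdiag(I_k ⊗ h_j^{3/2}Γ̄V̄, I_{m−k} ⊗ h_j^{1/2}ΓV), 𝒰 = blockdiag(U₁,…,U_n), Û_j = blockdiag(I_k ⊗ [h_j^{3/2}Γ̄V̄ stacked above h_j^{1/2}Γ̄V̊], I_{m−k} ⊗ h_j^{1/2}ΓV), 𝒰̂ = blockdiag(Û₁,…,Û_n). Then for every c: Σ_{j=1}^n Σ_{κ=1}^m ∫_{t_{j−1}}^{t_j} |x_κ(t)|² dt = |𝒰c|², and Σ_{j=1}^n { Σ_{κ=1}^k ∫_{t_{j−1}}^{t_j} (|x_κ(t)|² + |x_κ′(t)|²) dt + Σ_{κ=k+1}^m ∫_{t_{j−1}}^{t_j} |x_κ(t)|² dt } = |𝒰̂c|², where x_κ′ is the piecewise derivative and |·| denotes the Euclidean norm. -/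
open MeasureTheory Matrix Polynomial
open scoped BigOperators

/-- `p̄₀ = 1`, `p̄ᵢ(τ) = ∫₀^τ p_{i-1}(σ) dσ`. -/
noncomputable def pbarEval (p : ℕ → Polynomial ℝ) : ℕ → ℝ → ℝ
  | 0, _ => 1
  | i + 1, τ => ∫ s in (0:ℝ)..τ, (p i).eval s

/-- A quadrature rule on `[0,1]` with nodes `0 ≤ σ₁ < … < σ_M ≤ 1` and positive weights,
exact for all polynomials of degree `≤ d`. -/
def IsQuad {M : ℕ} (σ γ : Fin M → ℝ) (d : ℕ) : Prop :=
  (∀ i, σ i ∈ Set.Icc (0:ℝ) 1) ∧ StrictMono σ ∧ (∀ i, 0 < γ i) ∧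
    ∀ q : Polynomial ℝ, q.natDegree ≤ d →
      ∑ i, γ i * q.eval (σ i) = ∫ s in (0:ℝ)..1, q.eval s

/-- Row/column index type for the block matrix `𝒰` (also the index type of coefficient
vectors `c`): block `j`, then either a "differential" index `(κ, l)` with `l : Fin (N+1)`
or an "algebraic" index with `l : Fin N`. -/
abbrev UIdx (N m k n : ℕ) := Fin n × (Fin k × Fin (N + 1) ⊕ Fin (m - k) × Fin N)

/-- Row index type for `𝒰̂`: in each differential block the rows of `h^{3/2}Γ̄V̄`
are stacked above the rows of `h^{1/2}Γ̄V̊`. -/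
abbrev UhIdx (N m k n : ℕ) := Fin n × (Fin k × (Fin (N + 1) ⊕ Fin (N + 1)) ⊕ Fin (m - k) × Fin N)

/-- `𝒰 = blockdiag(U₁,…,U_n)`, `U_j = blockdiag(I_k ⊗ h_j^{3/2}Γ̄V̄, I_{m-k} ⊗ h_j^{1/2}ΓV)`. -/
noncomputable def Umat (N m k n : ℕ) (p : ℕ → Polynomial ℝ) (h : Fin n → ℝ)
    (σ γ : Fin N → ℝ) (σb γb : Fin (N + 1) → ℝ) :
    Matrix (UIdx N m k n) (UIdx N m k n) ℝ :=
  Matrix.of fun x y =>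
    match x, y with
    | (j, Sum.inl (κ, i)), (j', Sum.inl (κ', α)) =>
        if j = j' ∧ κ = κ' then
          h j ^ ((3:ℝ)/2) * Real.sqrt (γb i) * pbarEval p (α : ℕ) (σb i) else 0
    | (j, Sum.inr (κ, i)), (j', Sum.inr (κ', α)) =>
        if j = j' ∧ κ = κ' then
          h j ^ ((1:ℝ)/2) * Real.sqrt (γ i) * (p (α : ℕ)).eval (σ i) else 0
    | _, _ => 0

/-- `𝒰̂ = blockdiag(Û₁,…,Û_n)`, where `Û_j` has the blocks `h_j^{3/2}Γ̄V̄` stacked above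
`h_j^{1/2}Γ̄V̊` in the differential part (`V̊_{iα} = p̄'_{α-1}(σ̄ᵢ)`), and
`I_{m-k} ⊗ h_j^{1/2}ΓV` in the algebraic part. -/
noncomputable def Uhmat (N m k n : ℕ) (p : ℕ → Polynomial ℝ) (h : Fin n → ℝ)
    (σ γ : Fin N → ℝ) (σb γb : Fin (N + 1) → ℝ) :
    Matrix (UhIdx N m k n) (UIdx N m k n) ℝ :=
  Matrix.of fun x y =>
    match x, y with
    | (j, Sum.inl (κ, Sum.inl i)), (j', Sum.inl (κ', α)) =>
        if j = j' ∧ κ = κ' then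
          h j ^ ((3:ℝ)/2) * Real.sqrt (γb i) * pbarEval p (α : ℕ) (σb i) else 0
    | (j, Sum.inl (κ, Sum.inr i)), (j', Sum.inl (κ', α)) =>
        if j = j' ∧ κ = κ' then
          h j ^ ((1:ℝ)/2) * Real.sqrt (γb i) * deriv (pbarEval p (α : ℕ)) (σb i) else 0
    | (j, Sum.inr (κ, i)), (j', Sum.inr (κ', α)) =>
        if j = j' ∧ κ = κ' then
          h j ^ ((1:ℝ)/2) * Real.sqrt (γ i) * (p (α : ℕ)).eval (σ i) else 0
    | _, _ => 0

/-- The differential components (`κ = 1,…,k`) of `x = ℛc` on the subinterval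
`[t_{j-1}, t_j)`:  `x_κ(s) = Σ_{l=0}^{N} c_{jκl} · h_j · p̄_l((s - t_{j-1})/h_j)`. -/
noncomputable def xdiff (N m k n : ℕ) (p : ℕ → Polynomial ℝ) (t : ℕ → ℝ)
    (c : UIdx N m k n → ℝ) (j : Fin n) (κ : Fin k) (s : ℝ) : ℝ :=
  ∑ l : Fin (N + 1), c (j, Sum.inl (κ, l)) *
    ((t ((j : ℕ) + 1) - t (j : ℕ)) *
      pbarEval p (l : ℕ) ((s - t (j : ℕ)) / (t ((j : ℕ) + 1) - t (j : ℕ))))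

/-- The algebraic components (`κ = k+1,…,m`) of `x = ℛc` on the subinterval
`[t_{j-1}, t_j)`:  `x_κ(s) = Σ_{l=0}^{N-1} c_{jκl} · p_l((s - t_{j-1})/h_j)`. -/
noncomputable def xalg (N m k n : ℕ) (p : ℕ → Polynomial ℝ) (t : ℕ → ℝ)
    (c : UIdx N m k n → ℝ) (j : Fin n) (κ : Fin (m - k)) (s : ℝ) : ℝ :=
  ∑ l : Fin N, c (j, Sum.inr (κ, l)) *
    (p (l : ℕ)).eval ((s - t (j : ℕ)) / (t ((j : ℕ) + 1) - t (j : ℕ)))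

/-- `‖ℛc‖²_{L²}`. -/
noncomputable def normL2sq (N m k n : ℕ) (p : ℕ → Polynomial ℝ) (t : ℕ → ℝ)
    (c : UIdx N m k n → ℝ) : ℝ :=
  ∑ j : Fin n,
    ((∑ κ : Fin k, ∫ s in t (j : ℕ)..t ((j : ℕ) + 1), (xdiff N m k n p t c j κ s) ^ 2) +
     ∑ κ : Fin (m - k), ∫ s in t (j : ℕ)..t ((j : ℕ) + 1), (xalg N m k n p t c j κ s) ^ 2)

/-- `‖ℛc‖²_{H¹_{D,π}}` (with piecewise derivatives of the differential components). -/
noncomputable def normH1sq (N m k n : ℕ) (p : ℕ → Polynomial ℝ) (t : ℕ → ℝ)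
    (c : UIdx N m k n → ℝ) : ℝ :=
  ∑ j : Fin n,
    ((∑ κ : Fin k, ∫ s in t (j : ℕ)..t ((j : ℕ) + 1),
        ((xdiff N m k n p t c j κ s) ^ 2 + (deriv (xdiff N m k n p t c j κ) s) ^ 2)) +
     ∑ κ : Fin (m - k), ∫ s in t (j : ℕ)..t ((j : ℕ) + 1), (xalg N m k n p t c j κ s) ^ 2)

lemma exists_antideriv (q : Polynomial ℝ) :
    ∃ Q : Polynomial ℝ, derivative Q = q ∧ Q.natDegree ≤ q.natDegree + 1 := by
  refine ⟨∑ i ∈ Finset.range (q.natDegree + 1), C (q.coeff i / (i + 1)) * X ^ (i + 1), ?_, ?_⟩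
  · conv_rhs => rw [q.as_sum_range_C_mul_X_pow]
    rw [derivative_sum]
    refine Finset.sum_congr rfl fun i _ => ?_
    rw [derivative_C_mul_X_pow]
    have : ((i : ℝ) + 1) ≠ 0 := by positivity
    push_cast
    rw [div_mul_cancel₀ _ this]
  · refine natDegree_sum_le_of_forall_le _ _ fun i hi => ?_
    refine (natDegree_C_mul_X_pow_le _ _).trans ?_
    have := Finset.mem_range.1 hi
    omega

lemma exists_pbar (N : ℕ) (hN : 1 ≤ N) (p : ℕ → Polynomial ℝ)
    (hdeg : ∀ i < N, (p i).natDegree ≤ N - 1) (i : Fin (N + 1)) :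
    ∃ P : Polynomial ℝ, pbarEval p (i : ℕ) = (fun x => P.eval x) ∧ P.natDegree ≤ N := by
  obtain ⟨i, hi⟩ := i
  cases i with
  | zero => exact ⟨1, by funext x; simp [pbarEval], by simp⟩
  | succ i =>
    obtain ⟨Q, hQ, hd⟩ := exists_antideriv (p i)
    refine ⟨Q - C (Q.eval 0), ?_, ?_⟩
    · funext x
      simp only [pbarEval, eval_sub, eval_C]
      apply intervalIntegral.integral_eq_sub_of_hasDerivAt
      · intro y _
        have := Q.hasDerivAt y
        rwa [hQ] at this
      · exact (p i).continuous.intervalIntegrable _ _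
    · have := hdeg i (by omega)
      refine (natDegree_sub_le _ _).trans ?_
      simp only [natDegree_C]
      omega

lemma quad_scale {M : ℕ} {σ γ : Fin M → ℝ} {d : ℕ} (hq : IsQuad σ γ d) (R : Polynomial ℝ)
    (hR : R.natDegree ≤ d) (a b : ℝ) (hab : a < b) :
    ∫ s in a..b, R.eval ((s - a) / (b - a)) = (b - a) * ∑ i, γ i * R.eval (σ i) := by
  have hne : b - a ≠ 0 := (sub_pos.2 hab).ne'
  rw [hq.2.2.2 R hR]
  have h1 : ∀ s, (s - a) / (b - a) = s / (b - a) - a / (b - a) := fun s => sub_div _ _ _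
  simp only [h1]
  rw [intervalIntegral.integral_comp_div_sub (fun x => R.eval x) hne]
  rw [← sub_div, ← sub_div, sub_self, zero_div, div_self hne, smul_eq_mul]

lemma quad_sq {M : ℕ} {σ γ : Fin M → ℝ} {d e : ℕ} (hq : IsQuad σ γ d) (P : Polynomial ℝ)
    (hP : P.natDegree ≤ e) (he : 2 * e ≤ d) (a b : ℝ) (hab : a < b) :
    ∫ s in a..b, (P.eval ((s - a) / (b - a))) ^ 2
      = (b - a) * ∑ i, γ i * (P.eval (σ i)) ^ 2 := by
  have := quad_scale hq (P ^ 2) (natDegree_pow_le.trans (by nlinarith)) a b hab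
  simpa only [eval_pow] using this

lemma sq_half (h : ℝ) (hh : 0 < h) : (h ^ ((1:ℝ)/2)) ^ 2 = h := by
  rw [← Real.rpow_natCast, ← Real.rpow_mul hh.le]; norm_num

lemma sq_three_half (h : ℝ) (hh : 0 < h) : (h ^ ((3:ℝ)/2)) ^ 2 = h ^ 3 := by
  rw [← Real.rpow_natCast, ← Real.rpow_mul hh.le, ← Real.rpow_natCast]; norm_num

lemma term_sq (a g e : ℝ) (hg : 0 < g) : (a * Real.sqrt g * e) ^ 2 = a ^ 2 * (g * e ^ 2) := by
  rw [mul_pow, mul_pow, Real.sq_sqrt hg.le]; ring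

lemma Umat_inl (N m k n : ℕ) (p : ℕ → Polynomial ℝ) (h : Fin n → ℝ)
    (σ γ : Fin N → ℝ) (σb γb : Fin (N + 1) → ℝ) (c : UIdx N m k n → ℝ)
    (j : Fin n) (κ : Fin k) (i : Fin (N + 1)) :
    (Umat N m k n p h σ γ σb γb).mulVec c (j, Sum.inl (κ, i)) =
      h j ^ ((3:ℝ)/2) * Real.sqrt (γb i) *
        ∑ α : Fin (N + 1), c (j, Sum.inl (κ, α)) * pbarEval p (α : ℕ) (σb i) := by
  simp only [Matrix.mulVec, dotProduct, Fintype.sum_prod_type, Fintype.sum_sum_type, Umat,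
    Matrix.of_apply, ite_mul, zero_mul, Finset.sum_const_zero, add_zero, ite_and]
  simp [Finset.mul_sum, Finset.sum_ite_irrel]
  refine Finset.sum_congr rfl fun α _ => by ring

lemma Umat_inr (N m k n : ℕ) (p : ℕ → Polynomial ℝ) (h : Fin n → ℝ)
    (σ γ : Fin N → ℝ) (σb γb : Fin (N + 1) → ℝ) (c : UIdx N m k n → ℝ)
    (j : Fin n) (κ : Fin (m - k)) (i : Fin N) :
    (Umat N m k n p h σ γ σb γb).mulVec c (j, Sum.inr (κ, i)) =
      h j ^ ((1:ℝ)/2) * Real.sqrt (γ i) *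
        ∑ α : Fin N, c (j, Sum.inr (κ, α)) * (p (α : ℕ)).eval (σ i) := by
  simp only [Matrix.mulVec, dotProduct, Fintype.sum_prod_type, Fintype.sum_sum_type, Umat,
    Matrix.of_apply, ite_mul, zero_mul, Finset.sum_const_zero, zero_add, ite_and]
  simp [Finset.mul_sum, Finset.sum_ite_irrel]
  refine Finset.sum_congr rfl fun α _ => by ring

lemma Uhmat_inl_inl (N m k n : ℕ) (p : ℕ → Polynomial ℝ) (h : Fin n → ℝ)
    (σ γ : Fin N → ℝ) (σb γb : Fin (N + 1) → ℝ) (c : UIdx N m k n → ℝ)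
    (j : Fin n) (κ : Fin k) (i : Fin (N + 1)) :
    (Uhmat N m k n p h σ γ σb γb).mulVec c (j, Sum.inl (κ, Sum.inl i)) =
      h j ^ ((3:ℝ)/2) * Real.sqrt (γb i) *
        ∑ α : Fin (N + 1), c (j, Sum.inl (κ, α)) * pbarEval p (α : ℕ) (σb i) := by
  simp only [Matrix.mulVec, dotProduct, Fintype.sum_prod_type, Fintype.sum_sum_type, Uhmat,
    Matrix.of_apply, ite_mul, zero_mul, Finset.sum_const_zero, add_zero, ite_and]
  simp [Finset.mul_sum, Finset.sum_ite_irrel]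
  refine Finset.sum_congr rfl fun α _ => by ring

lemma Uhmat_inl_inr (N m k n : ℕ) (p : ℕ → Polynomial ℝ) (h : Fin n → ℝ)
    (σ γ : Fin N → ℝ) (σb γb : Fin (N + 1) → ℝ) (c : UIdx N m k n → ℝ)
    (j : Fin n) (κ : Fin k) (i : Fin (N + 1)) :
    (Uhmat N m k n p h σ γ σb γb).mulVec c (j, Sum.inl (κ, Sum.inr i)) =
      h j ^ ((1:ℝ)/2) * Real.sqrt (γb i) *
        ∑ α : Fin (N + 1), c (j, Sum.inl (κ, α)) * deriv (pbarEval p (α : ℕ)) (σb i) := by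
  simp only [Matrix.mulVec, dotProduct, Fintype.sum_prod_type, Fintype.sum_sum_type, Uhmat,
    Matrix.of_apply, ite_mul, zero_mul, Finset.sum_const_zero, add_zero, ite_and]
  simp [Finset.mul_sum, Finset.sum_ite_irrel]
  refine Finset.sum_congr rfl fun α _ => by ring

lemma Uhmat_inr (N m k n : ℕ) (p : ℕ → Polynomial ℝ) (h : Fin n → ℝ)
    (σ γ : Fin N → ℝ) (σb γb : Fin (N + 1) → ℝ) (c : UIdx N m k n → ℝ)
    (j : Fin n) (κ : Fin (m - k)) (i : Fin N) :
    (Uhmat N m k n p h σ γ σb γb).mulVec c (j, Sum.inr (κ, i)) =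
      h j ^ ((1:ℝ)/2) * Real.sqrt (γ i) *
        ∑ α : Fin N, c (j, Sum.inr (κ, α)) * (p (α : ℕ)).eval (σ i) := by
  simp only [Matrix.mulVec, dotProduct, Fintype.sum_prod_type, Fintype.sum_sum_type, Uhmat,
    Matrix.of_apply, ite_mul, zero_mul, Finset.sum_const_zero, zero_add, ite_and]
  simp [Finset.mul_sum, Finset.sum_ite_irrel]
  refine Finset.sum_congr rfl fun α _ => by ring

theorem stmt3 (N m k n : ℕ) (hN : 1 ≤ N) (hk : 1 ≤ k) (hkm : k < m) (hn : 1 ≤ n)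
    (t : ℕ → ℝ) (hmono : ∀ j < n, t j < t (j + 1))
    (p : ℕ → Polynomial ℝ)
    (hdeg : ∀ i < N, (p i).natDegree ≤ N - 1)
    (hli : LinearIndependent ℝ fun i : Fin N => p i)
    (σ γ : Fin N → ℝ) (σb γb : Fin (N + 1) → ℝ)
    (hq : IsQuad σ γ (2 * N - 2)) (hqb : IsQuad σb γb (2 * N)) :
    ∀ c : UIdx N m k n → ℝ,
      normL2sq N m k n p t c
        = ∑ i, ((Umat N m k n p (fun j => t ((j : ℕ) + 1) - t (j : ℕ)) σ γ σb γb).mulVec c i) ^ 2 ∧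
      normH1sq N m k n p t c
        = ∑ i, ((Uhmat N m k n p (fun j => t ((j : ℕ) + 1) - t (j : ℕ)) σ γ σb γb).mulVec c i) ^ 2 := by
  intro c
  choose P hP hPd using exists_pbar N hN p hdeg
  have hh : ∀ j : Fin n, 0 < t ((j : ℕ) + 1) - t (j : ℕ) := fun j => sub_pos.2 (hmono j j.2)
  -- the reference polynomials of the components
  obtain ⟨D, hD⟩ : ∃ D : Fin n → Fin k → Polynomial ℝ,
      ∀ j κ, D j κ = ∑ l : Fin (N + 1), C (c (j, Sum.inl (κ, l))) * P l := ⟨_, fun _ _ => rfl⟩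
  obtain ⟨A, hA⟩ : ∃ A : Fin n → Fin (m - k) → Polynomial ℝ,
      ∀ j κ, A j κ = ∑ l : Fin N, C (c (j, Sum.inr (κ, l))) * p l := ⟨_, fun _ _ => rfl⟩
  have hDd : ∀ j κ, (D j κ).natDegree ≤ N := fun j κ => by
    rw [hD]
    exact natDegree_sum_le_of_forall_le _ _ fun l _ => (natDegree_C_mul_le _ _).trans (hPd l)
  have hAd : ∀ j κ, (A j κ).natDegree ≤ N - 1 := fun j κ => by
    rw [hA]
    exact natDegree_sum_le_of_forall_le _ _ fun l _ =>
      (natDegree_C_mul_le _ _).trans (hdeg l l.2)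
  have hDe : ∀ j κ x, ∑ l : Fin (N + 1), c (j, Sum.inl (κ, l)) * pbarEval p (l : ℕ) x
      = (D j κ).eval x := fun j κ x => by
    simp [hD, hP, eval_finsetSum]
  have hDe' : ∀ j κ x, ∑ l : Fin (N + 1), c (j, Sum.inl (κ, l)) * deriv (pbarEval p (l : ℕ)) x
      = (derivative (D j κ)).eval x := fun j κ x => by
    simp [hD, hP, eval_finsetSum, derivative_sum]
  have hAe : ∀ j κ x, ∑ l : Fin N, c (j, Sum.inr (κ, l)) * (p (l : ℕ)).eval x
      = (A j κ).eval x := fun j κ x => by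
    simp [hA, eval_finsetSum]
  have hxd : ∀ j κ, xdiff N m k n p t c j κ = fun s => (t ((j : ℕ) + 1) - t (j : ℕ)) *
      (D j κ).eval ((s - t (j : ℕ)) / (t ((j : ℕ) + 1) - t (j : ℕ))) := fun j κ => by
    funext s
    rw [← hDe, Finset.mul_sum]
    exact Finset.sum_congr rfl fun l _ => by ring
  have hxd' : ∀ j κ s, deriv (xdiff N m k n p t c j κ) s =
      (derivative (D j κ)).eval ((s - t (j : ℕ)) / (t ((j : ℕ) + 1) - t (j : ℕ))) :=
    fun j κ s => by
    rw [hxd]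
    have h1 : HasDerivAt (fun s : ℝ => (s - t (j : ℕ)) / (t ((j : ℕ) + 1) - t (j : ℕ)))
        (1 / (t ((j : ℕ) + 1) - t (j : ℕ))) s :=
      ((hasDerivAt_id s).sub_const _).div_const _
    have h2 := (((D j κ).hasDerivAt _).comp s h1).const_mul (t ((j : ℕ) + 1) - t (j : ℕ))
    refine h2.deriv.trans ?_
    have := (hh j).ne'
    field_simp
  have hxa : ∀ j κ s, xalg N m k n p t c j κ s =
      (A j κ).eval ((s - t (j : ℕ)) / (t ((j : ℕ) + 1) - t (j : ℕ))) := fun j κ s => by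
    rw [← hAe]; rfl
  have I1 : ∀ j κ, ∫ s in t (j : ℕ)..t ((j : ℕ) + 1), (xdiff N m k n p t c j κ s) ^ 2 =
      ∑ i, (t ((j : ℕ) + 1) - t (j : ℕ)) ^ 3 * (γb i * ((D j κ).eval (σb i)) ^ 2) :=
    fun j κ => by
    simp only [hxd, mul_pow]
    rw [intervalIntegral.integral_const_mul,
      quad_sq hqb (D j κ) (hDd j κ) le_rfl _ _ (hmono j j.2), ← Finset.mul_sum]
    ring
  have I2 : ∀ j κ, ∫ s in t (j : ℕ)..t ((j : ℕ) + 1),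
      (deriv (xdiff N m k n p t c j κ) s) ^ 2 =
      ∑ i, (t ((j : ℕ) + 1) - t (j : ℕ)) * (γb i * ((derivative (D j κ)).eval (σb i)) ^ 2) :=
    fun j κ => by
    simp only [hxd']
    rw [quad_sq hqb (derivative (D j κ)) (e := N) ?_ le_rfl _ _ (hmono j j.2), ← Finset.mul_sum]
    have := natDegree_derivative_le (D j κ)
    have := hDd j κ
    omega
  have I3 : ∀ j κ, ∫ s in t (j : ℕ)..t ((j : ℕ) + 1), (xalg N m k n p t c j κ s) ^ 2 =
      ∑ i, (t ((j : ℕ) + 1) - t (j : ℕ)) * (γ i * ((A j κ).eval (σ i)) ^ 2) :=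
    fun j κ => by
    simp only [hxa]
    rw [quad_sq hq (A j κ) (hAd j κ) (by omega) _ _ (hmono j j.2), ← Finset.mul_sum]
  have I4 : ∀ j κ, ∫ s in t (j : ℕ)..t ((j : ℕ) + 1),
      ((xdiff N m k n p t c j κ s) ^ 2 + (deriv (xdiff N m k n p t c j κ) s) ^ 2) =
      (∫ s in t (j : ℕ)..t ((j : ℕ) + 1), (xdiff N m k n p t c j κ s) ^ 2) +
      ∫ s in t (j : ℕ)..t ((j : ℕ) + 1), (deriv (xdiff N m k n p t c j κ) s) ^ 2 :=
    fun j κ => by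
    apply intervalIntegral.integral_add
    · apply Continuous.intervalIntegrable
      simp only [hxd]
      fun_prop
    · apply Continuous.intervalIntegrable
      simp only [hxd']
      fun_prop
  constructor
  · simp only [normL2sq, I1, I3, Fintype.sum_prod_type, Fintype.sum_sum_type, Umat_inl, Umat_inr,
      hDe, hAe, term_sq _ _ _ (hqb.2.2.1 _), term_sq _ _ _ (hq.2.2.1 _), sq_half _ (hh _),
      sq_three_half _ (hh _)]
  · simp only [normH1sq, I4, I1, I2, I3, Fintype.sum_prod_type, Fintype.sum_sum_type,
      Uhmat_inl_inl, Uhmat_inl_inr, Uhmat_inr, hDe, hDe', hAe, term_sq _ _ _ (hqb.2.2.1 _),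
      term_sq _ _ _ (hq.2.2.1 _), sq_half _ (hh _), sq_three_half _ (hh _)]
end

section
/- Let N ≥ 1, let P_i denote the i-th Legendre polynomial, and let p̄₀(τ) = 1, p̄_i(τ) = P_i(2τ−1) − (−1)^i for i = 1,…,N (the modified Legendre basis). Let (σ̄ᵢ,γ̄ᵢ)_{i=1..N+1} be a quadrature on [0,1] with positive weights exact for degree 2N, and set V̄_{iα} = p̄_{α−1}(σ̄ᵢ), Γ̄ = diag(γ̄ᵢ^{1/2}). Then every eigenvalue of V̄ᵀΓ̄²V̄ is at most N+2; equivalently, the largest singular value of Γ̄V̄ is at most (N+2)^{1/2}. -/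
open MeasureTheory Matrix Polynomial
open scoped BigOperators

/-- `Γ = diag(γᵢ^{1/2})`. -/
noncomputable def Gmat {M : ℕ} (γ : Fin M → ℝ) : Matrix (Fin M) (Fin M) ℝ :=
  Matrix.diagonal fun i => Real.sqrt (γ i)

/-- `s` is a singular value of `A`: `s ≥ 0` and `s²` is an eigenvalue of `AᵀA`. -/
def IsSingVal {I J : Type} [Fintype I] [Fintype J] (A : Matrix I J ℝ) (s : ℝ) : Prop :=
  0 ≤ s ∧ ∃ v : J → ℝ, v ≠ 0 ∧ (Aᵀ * A).mulVec v = s ^ 2 • v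

/-- The `i`-th Legendre polynomial, via Rodrigues' formula
`P_i(x) = (1/(2^i i!)) (d/dx)^i (x²-1)^i`. -/
noncomputable def legendre (i : ℕ) : Polynomial ℝ :=
  Polynomial.C (1 / (2 ^ i * (Nat.factorial i : ℝ))) *
    Polynomial.derivative^[i] ((Polynomial.X ^ 2 - 1) ^ i)

/-- The modified Legendre basis functions: `p̄₀(τ) = 1` and
`p̄ᵢ(τ) = Pᵢ(2τ-1) - (-1)^i` for `i ≥ 1`. -/
noncomputable def mlp (i : ℕ) (τ : ℝ) : ℝ :=
  if i = 0 then 1 else (legendre i).eval (2 * τ - 1) - (-1) ^ i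


lemma lg_w_dvd (n k : ℕ) (c : ℝ) (hc : c = 1 ∨ c = -1) (hk : k < n) :
    (derivative^[k] ((X ^ 2 - 1 : ℝ[X]) ^ n)).eval c = 0 := by
  have hd : (X - C c) ^ n ∣ (X ^ 2 - 1 : ℝ[X]) ^ n := by
    apply pow_dvd_pow_of_dvd
    rw [dvd_iff_isRoot]
    rcases hc with rfl | rfl <;> simp
  have h2 := pow_sub_dvd_iterate_derivative_of_pow_dvd k hd
  have h3 : (X - C c) ∣ derivative^[k] ((X ^ 2 - 1 : ℝ[X]) ^ n) :=
    (dvd_pow_self _ (by omega)).trans h2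
  rwa [dvd_iff_isRoot] at h3

lemma lg_parts (p q : ℝ[X]) (h1 : p.eval 1 = 0) (h2 : p.eval (-1) = 0) :
    ∫ x in (-1:ℝ)..1, (q * derivative p).eval x
      = - ∫ x in (-1:ℝ)..1, (derivative q * p).eval x := by
  have h := intervalIntegral.integral_mul_deriv_eq_deriv_mul (a := (-1:ℝ)) (b := 1)
    (u := fun x => q.eval x) (v := fun x => p.eval x)
    (u' := fun x => (derivative q).eval x) (v' := fun x => (derivative p).eval x)
    (fun x _ => q.hasDerivAt x) (fun x _ => p.hasDerivAt x)
    ((derivative q).continuous.intervalIntegrable _ _)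
    ((derivative p).continuous.intervalIntegrable _ _)
  simp only [h1, h2] at h
  simp only [eval_mul]
  rw [h]; simp

lemma lg_iter (n : ℕ) (k : ℕ) : ∀ (q : ℝ[X]), k ≤ n →
    ∫ x in (-1:ℝ)..1, (q * derivative^[k] ((X ^ 2 - 1 : ℝ[X]) ^ n)).eval x
      = (-1) ^ k * ∫ x in (-1:ℝ)..1, (derivative^[k] q * (X ^ 2 - 1 : ℝ[X]) ^ n).eval x := by
  induction k with
  | zero => intro q _; simp
  | succ k ih =>
    intro q hk
    rw [Function.iterate_succ_apply', lg_parts _ _ (lg_w_dvd n k 1 (Or.inl rfl) (by omega))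
      (lg_w_dvd n k (-1) (Or.inr rfl) (by omega)), ih _ (by omega), Function.iterate_succ_apply]
    ring

lemma lg_w_deg (n : ℕ) : ((X ^ 2 - 1 : ℝ[X]) ^ n).natDegree = 2 * n := by
  have : (X ^ 2 - 1 : ℝ[X]) = X ^ 2 - C 1 := by simp
  rw [natDegree_pow, this, natDegree_X_pow_sub_C]; ring

lemma lg_w_monic (n : ℕ) : ((X ^ 2 - 1 : ℝ[X]) ^ n).Monic := by
  have : (X ^ 2 - 1 : ℝ[X]) = X ^ 2 - C 1 := by simp
  rw [this]
  exact (monic_X_pow_sub_C 1 (by norm_num)).pow n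

lemma lg_deg (n : ℕ) : (legendre n).natDegree ≤ n := by
  unfold legendre
  refine (natDegree_C_mul_le _ _).trans ((natDegree_iterate_derivative _ _).trans ?_)
  rw [lg_w_deg]; omega

lemma lg_top (n : ℕ) : derivative^[n] (legendre n)
    = C (1 / (2 ^ n * (Nat.factorial n : ℝ)) * (Nat.factorial (2 * n) : ℝ)) := by
  unfold legendre
  rw [iterate_derivative_C_mul, ← Function.iterate_add_apply, ← two_mul]
  have h : natDegree (derivative^[2 * n] ((X ^ 2 - 1 : ℝ[X]) ^ n)) = 0 := by
    have := natDegree_iterate_derivative ((X ^ 2 - 1 : ℝ[X]) ^ n) (2 * n)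
    rw [lg_w_deg] at this; omega
  rw [eq_C_of_natDegree_eq_zero h, coeff_iterate_derivative]
  have hm : ((X ^ 2 - 1 : ℝ[X]) ^ n).coeff (2 * n) = 1 := by
    have := lg_w_monic n
    rwa [Monic, leadingCoeff, lg_w_deg] at this
  simp [hm, Nat.descFactorial_self]

lemma lg_int (n : ℕ) (q : ℝ[X]) :
    ∫ x in (-1:ℝ)..1, (q * legendre n).eval x
      = 1 / (2 ^ n * (Nat.factorial n : ℝ)) * ((-1) ^ n *
        ∫ x in (-1:ℝ)..1, (derivative^[n] q * (X ^ 2 - 1 : ℝ[X]) ^ n).eval x) := by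
  rw [← lg_iter n n q le_rfl, ← intervalIntegral.integral_const_mul]
  congr 1; ext x
  simp only [legendre, eval_mul, eval_C]; ring

lemma lg_orth_lt {m n : ℕ} (h : m < n) :
    ∫ x in (-1:ℝ)..1, (legendre m * legendre n).eval x = 0 := by
  rw [lg_int, iterate_derivative_eq_zero (lt_of_le_of_lt (lg_deg m) h)]
  simp

lemma lg_orth {m n : ℕ} (h : m ≠ n) :
    ∫ x in (-1:ℝ)..1, (legendre m * legendre n).eval x = 0 := by
  rcases lt_or_gt_of_ne h with h | h
  · exact lg_orth_lt h
  · rw [mul_comm]; exact lg_orth_lt h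

lemma lg_norm (n : ℕ) :
    ∫ x in (-1:ℝ)..1, (legendre n * legendre n).eval x ≤ 2 := by
  rw [lg_int, lg_top]
  have e : (fun x : ℝ => (C (1 / (2 ^ n * (Nat.factorial n : ℝ)) * (Nat.factorial (2 * n) : ℝ))
      * (X ^ 2 - 1 : ℝ[X]) ^ n).eval x) = fun x => (1 / (2 ^ n * (Nat.factorial n : ℝ)) *
        (Nat.factorial (2 * n) : ℝ) * (-1) ^ n) * (1 - x ^ 2) ^ n := by
    ext x
    simp only [eval_mul, eval_C, eval_pow, eval_sub, eval_X, eval_one]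
    rw [mul_assoc _ ((-1) ^ n), ← mul_pow]; ring
  rw [e, intervalIntegral.integral_const_mul]
  have hI : ∫ x in (-1:ℝ)..1, (1 - x ^ 2) ^ n ≤ 2 := by
    have : ∫ x in (-1:ℝ)..1, (1 - x ^ 2) ^ n ≤ ∫ x in (-1:ℝ)..1, (1:ℝ) := by
      apply intervalIntegral.integral_mono_on (by norm_num)
      · exact Continuous.intervalIntegrable (by fun_prop) _ _
      · simp
      · intro x hx
        have := hx.1
        have := hx.2
        apply pow_le_one₀ <;> nlinarith
    refine this.trans ?_
    norm_num
  have hc : (Nat.factorial (2 * n) : ℝ) ≤ 4 ^ n * ((Nat.factorial n : ℝ) * Nat.factorial n) := by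
    have h1 := Nat.choose_mul_factorial_mul_factorial (show n ≤ 2 * n by omega)
    have h2 : Nat.choose (2 * n) n ≤ 4 ^ n := by
      have := Nat.choose_le_two_pow (2 * n) n
      rwa [pow_mul] at this
    rw [show 2 * n - n = n by omega] at h1
    rw [← h1, mul_assoc]
    exact_mod_cast Nat.mul_le_mul_right _ h2
  have hf : (0:ℝ) < Nat.factorial n := by exact_mod_cast Nat.factorial_pos n
  have hs : ((-1:ℝ) ^ n) * (-1) ^ n = 1 := by rw [← mul_pow]; norm_num
  have h4 : (4:ℝ) ^ n = 2 ^ n * 2 ^ n := by rw [← mul_pow]; norm_num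
  rw [h4] at hc
  set J := ∫ x in (-1:ℝ)..1, (1 - x ^ 2) ^ n
  have hk : 1 / (2 ^ n * (Nat.factorial n : ℝ)) * (1 / (2 ^ n * (Nat.factorial n : ℝ)) *
        (Nat.factorial (2 * n) : ℝ)) ≤ 1 := by
    have : 1 / (2 ^ n * (Nat.factorial n : ℝ)) * (1 / (2 ^ n * (Nat.factorial n : ℝ)) *
        (Nat.factorial (2 * n) : ℝ)) = (Nat.factorial (2 * n) : ℝ) /
          (2 ^ n * 2 ^ n * ((Nat.factorial n : ℝ) * Nat.factorial n)) := by
      field_simp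
    rw [this]
    exact (div_le_one (by positivity)).2 hc
  have hk0 : 0 ≤ 1 / (2 ^ n * (Nat.factorial n : ℝ)) * (1 / (2 ^ n * (Nat.factorial n : ℝ)) *
        (Nat.factorial (2 * n) : ℝ)) := by positivity
  calc _ = (1 / (2 ^ n * (Nat.factorial n : ℝ)) * (1 / (2 ^ n * (Nat.factorial n : ℝ)) *
        (Nat.factorial (2 * n) : ℝ))) * (((-1:ℝ) ^ n) * (-1) ^ n) * J := by ring
    _ ≤ 2 := by rw [hs, mul_one]; nlinarith

/-- Shifted Legendre polynomial. -/
noncomputable def slg (n : ℕ) : ℝ[X] := (legendre n).comp (C 2 * X - C 1)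

lemma slg_eval (n : ℕ) (x : ℝ) : (slg n).eval x = (legendre n).eval (2 * x - 1) := by
  simp [slg]

lemma slg_deg (n : ℕ) : (slg n).natDegree ≤ n := by
  unfold slg
  refine natDegree_comp_le.trans ?_
  have : (C 2 * X - C 1 : ℝ[X]).natDegree ≤ 1 := by compute_degree
  calc _ ≤ n * 1 := Nat.mul_le_mul (lg_deg n) this
    _ = n := mul_one n

lemma slg_int (m n : ℕ) : ∫ x in (0:ℝ)..1, (slg m).eval x * (slg n).eval x
    = 2⁻¹ * ∫ x in (-1:ℝ)..1, (legendre m * legendre n).eval x := by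
  have := intervalIntegral.integral_comp_mul_sub (a := (0:ℝ)) (b := 1)
    (fun x => (legendre m * legendre n).eval x) (c := 2) (by norm_num) 1
  norm_num at this
  simp only [slg_eval, eval_mul]
  simpa using this

lemma slg_zero : slg 0 = 1 := by
  simp [slg, legendre]

lemma slg_sq_int (M : ℕ) (w : Fin M → ℝ) :
    ∫ x in (0:ℝ)..1, (∑ a, w a * (slg a).eval x) ^ 2 ≤ ∑ a, w a ^ 2 := by
  have e : (fun x : ℝ => (∑ a, w a * (slg (a : Fin M)).eval x) ^ 2) = fun x =>
      ∑ a, ∑ b, (w a * w b) * ((slg a).eval x * (slg b).eval x) := by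
    ext x
    rw [sq, Finset.sum_mul_sum]
    refine Finset.sum_congr rfl fun a _ => Finset.sum_congr rfl fun b _ => by ring
  rw [e, intervalIntegral.integral_finsetSum
    (fun a _ => Continuous.intervalIntegrable (by fun_prop) _ _)]
  apply Finset.sum_le_sum
  intro a _
  rw [intervalIntegral.integral_finsetSum
    (fun a _ => Continuous.intervalIntegrable (by fun_prop) _ _), Finset.sum_eq_single a]
  · rw [intervalIntegral.integral_const_mul, slg_int]
    have := lg_norm a
    nlinarith [sq_nonneg (w a)]
  · intro b _ hb
    rw [intervalIntegral.integral_const_mul, slg_int, lg_orth (fun h => hb (Fin.ext h.symm))]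
    simp
  · simp

theorem stmt8 (N : ℕ) (hN : 1 ≤ N)
    (σb γb : Fin (N + 1) → ℝ) (hqb : IsQuad σb γb (2 * N))
    (Vb : Matrix (Fin (N + 1)) (Fin (N + 1)) ℝ)
    (hVb : ∀ i α, Vb i α = mlp (α : ℕ) (σb i)) :
    (∀ (μ : ℝ) (v : Fin (N + 1) → ℝ), v ≠ 0 →
        (Vbᵀ * Gmat γb ^ 2 * Vb).mulVec v = μ • v → μ ≤ (N : ℝ) + 2) ∧
    (∀ s : ℝ, IsSingVal (Gmat γb * Vb) s → s ≤ Real.sqrt ((N : ℝ) + 2)) := by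
  have key : ∀ (μ : ℝ) (v : Fin (N + 1) → ℝ), v ≠ 0 →
      (Vbᵀ * Gmat γb ^ 2 * Vb).mulVec v = μ • v → μ ≤ (N : ℝ) + 2 := by
    intro μ v hv h
    obtain ⟨-, -, hpos, hex⟩ := hqb
    have hvpos : 0 < ∑ a, v a ^ 2 := by
      obtain ⟨a, ha⟩ := Function.ne_iff.1 hv
      exact Finset.sum_pos' (fun _ _ => sq_nonneg _) ⟨a, Finset.mem_univ _, by
        have : v a ≠ 0 := ha
        positivity⟩
    have hG : Gmat γb ^ 2 = Matrix.diagonal γb := by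
      rw [Gmat, sq, Matrix.diagonal_mul_diagonal]
      congr 1; ext i
      exact Real.mul_self_sqrt (hpos i).le
    set u : Fin (N + 1) → ℝ := fun a => if (a : ℕ) = 0 then 1 else -(-1) ^ (a : ℕ) with hu
    set c : ℝ := ∑ a, u a * v a with hc
    set w : Fin (N + 1) → ℝ := fun a => if (a : ℕ) = 0 then c else v a with hw
    have hVv : ∀ i, (Vb.mulVec v) i = ∑ a, w a * (slg a).eval (σb i) := by
      intro i
      simp only [Matrix.mulVec, dotProduct, hVb]
      rw [Fin.sum_univ_succ, Fin.sum_univ_succ (fun a => w a * _)]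
      simp only [hw, hc]
      rw [Fin.sum_univ_succ (fun a => u a * v a)]
      simp only [hu, mlp, slg_zero, slg_eval, Fin.val_zero, Fin.val_succ, if_true, eval_one,
        Nat.succ_ne_zero, if_false, mul_one, one_mul, add_assoc]
      rw [← Finset.sum_add_distrib]
      congr 1
      exact Finset.sum_congr rfl fun a _ => by ring
    have hq : μ * ∑ a, v a ^ 2 = ∑ i, γb i * (Vb.mulVec v i) ^ 2 := by
      have h1 : v ⬝ᵥ (Vbᵀ * Gmat γb ^ 2 * Vb).mulVec v = μ * ∑ a, v a ^ 2 := by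
        rw [h, dotProduct_smul, smul_eq_mul]
        simp only [dotProduct, sq]
      rw [← h1, hG, ← Matrix.mulVec_mulVec, ← Matrix.mulVec_mulVec, Matrix.dotProduct_mulVec,
        Matrix.vecMul_transpose]
      simp only [dotProduct, Matrix.mulVec_diagonal]
      exact Finset.sum_congr rfl fun a _ => by ring
    set f : ℝ[X] := ∑ a : Fin (N + 1), C (w a) * slg a with hf
    have hfe : ∀ x, f.eval x = ∑ a, w a * (slg a).eval x := by
      intro x; simp [hf, eval_finsetSum]
    have hfd : f.natDegree ≤ N := by
      refine natDegree_sum_le_of_forall_le _ _ fun a _ => ?_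
      exact (natDegree_C_mul_le _ _).trans ((slg_deg a).trans (by omega))
    have hint := hex (f ^ 2) (natDegree_pow_le.trans (Nat.mul_le_mul_left 2 hfd))
    simp only [eval_pow, hfe] at hint
    have hb : μ * ∑ a, v a ^ 2 ≤ ∑ a, w a ^ 2 := by
      rw [hq]; simp only [hVv]; rw [hint]; exact slg_sq_int _ w
    have hcs : c ^ 2 ≤ (N + 1) * ∑ a, v a ^ 2 := by
      have := Finset.sum_mul_sq_le_sq_mul_sq Finset.univ u v
      have hu2 : ∑ a, u a ^ 2 = N + 1 := by
        have : ∀ a, u a ^ 2 = 1 := by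
          intro a
          simp only [hu]
          split_ifs
          · norm_num
          · rw [neg_sq, ← pow_mul, mul_comm, pow_mul]; norm_num
        simp [this]
      rwa [hu2] at this
    have hw2 : ∑ a, w a ^ 2 ≤ c ^ 2 + ∑ a, v a ^ 2 := by
      rw [Fin.sum_univ_succ, Fin.sum_univ_succ (fun a => v a ^ 2)]
      simp only [hw, Fin.val_zero, Fin.val_succ, if_true, Nat.succ_ne_zero, if_false]
      nlinarith [sq_nonneg (v 0)]
    refine le_of_mul_le_mul_right ?_ hvpos
    linarith
  refine ⟨key, ?_⟩
  rintro s ⟨hs, v, hv, h⟩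
  apply Real.le_sqrt_of_sq_le
  refine key _ v hv ?_
  rw [← h, Matrix.transpose_mul]
  congr 1
  rw [show (Gmat γb)ᵀ = Gmat γb by simp [Gmat], sq]
  simp only [Matrix.mul_assoc]
end

section
/- Let N ≥ 1, n ≥ 2, and let f = (f₁,…,f_{N+1}) ∈ ℝ^{N+1} with f₁ = 1 and f_j = 1 + (−1)^j for j = 2,…,N+1 (i.e. f = (1,2,0,2,0,…), the vector arising from the modified Legendre basis, whose entries f_{i+1} = ∫₀¹ (d/dτ)[P_i(2τ−1)] dτ = 1 + (−1)^{i+1} for i ≥ 1... specifically f_j = 1+(−1)^j for j ≥ 2). Then |f|² = 2N+1 if N is even and |f|² = 2N+3 if N is odd, and consequently, with C_s ∈ ℝ^{(n−1)×n(N+1)} the block bidiagonal matrix whose j-th row carries f in columns (j−1)(N+1)+1,…,j(N+1) and −1 in column j(N+1)+1, every eigenvalue λ of C_sC_sᵀ satisfies 2N ≤ λ ≤ 2N+6. -/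
open Matrix
open scoped BigOperators

/-- The constraint matrix `C_s`: row `j` (for `j = 1,…,n-1`) carries the vector `f` in the
`j`-th block of `N+1` columns and the entry `-1` in the first column of block `j+1`.
Columns are indexed by pairs `(block, position in block)`. -/
def Cs (N n : ℕ) (f : Fin (N + 1) → ℝ) :
    Matrix (Fin (n - 1)) (Fin n × Fin (N + 1)) ℝ :=
  Matrix.of fun j q =>
    if (q.1 : ℕ) = (j : ℕ) then f q.2
    else if (q.1 : ℕ) = (j : ℕ) + 1 ∧ q.2 = 0 then -1 else 0

theorem aux_sum (N : ℕ) (g : ℕ → ℝ) (h0 : g 0 = 1)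
    (hg : ∀ l, l ≠ 0 → g l = 1 + (-1) ^ (l + 1)) :
    (∑ l ∈ Finset.range (N + 1), g l ^ 2) =
      (if Even N then 2 * (N : ℝ) + 1 else 2 * (N : ℝ) + 3) := by
  induction N with
  | zero => simp [h0]
  | succ k ih =>
    rw [Finset.sum_range_succ, ih, hg (k + 1) (by omega)]
    rcases Nat.even_or_odd k with hk | hk
    · have h1 : ¬ Even (k + 1) := by grind
      have h2 : Even (k + 1 + 1) := by grind
      rw [if_pos hk, if_neg h1, h2.neg_one_pow]
      push_cast
      ring
    · have h1 : Even (k + 1) := by grind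
      have h2 : Odd (k + 1 + 1) := by grind
      have h3 : ¬ Even k := by grind
      rw [if_neg h3, if_pos h1, h2.neg_one_pow]
      push_cast
      ring

theorem aux_col (N m : ℕ) (f : Fin (N + 1) → ℝ) (hf0 : f 0 = 1) (v : Fin m → ℝ)
    (b : Fin (m + 1)) (p : Fin (N + 1)) :
    (∑ j : Fin m, (Cs N (m + 1) f : Matrix (Fin m) _ ℝ) j (b, p) * v j) =
      f p * (Fin.snoc v 0 : Fin (m + 1) → ℝ) b -
        (if p = 0 then (Fin.cons 0 v : Fin (m + 1) → ℝ) b else 0) := by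
  have key : ∀ j : Fin m, (Cs N (m + 1) f : Matrix (Fin m) _ ℝ) j (b, p) * v j =
      f p * (if b = j.castSucc then v j else 0) -
        (if p = 0 then (if b = j.succ then v j else 0) else 0) := by
    intro j
    simp only [Cs, Matrix.of_apply, Fin.ext_iff, Fin.val_castSucc, Fin.val_succ]
    split_ifs <;> simp_all <;> omega
  have ha : (∑ j : Fin m, if b = j.castSucc then v j else 0) =
      (Fin.snoc v 0 : Fin (m + 1) → ℝ) b := by
    refine Fin.lastCases ?_ (fun i => ?_) b
    · simp [Fin.ext_iff, Fin.snoc_last]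
      refine Finset.sum_eq_zero fun i _ => ?_
      rw [if_neg]
      have := i.isLt
      omega
    · simp
  have hc : (∑ j : Fin m, if b = j.succ then v j else 0) =
      (Fin.cons 0 v : Fin (m + 1) → ℝ) b := by
    refine Fin.cases ?_ (fun i => ?_) b
    · simp [Fin.ext_iff]
    · simp
  rw [Finset.sum_congr rfl fun j _ => key j, Finset.sum_sub_distrib, ← Finset.mul_sum, ha]
  congr 1
  split_ifs
  · exact hc
  · simp

theorem aux_eig (N m : ℕ) (f : Fin (N + 1) → ℝ) (hf0 : f 0 = 1) (v : Fin m → ℝ) (hv : v ≠ 0)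
    (μ : ℝ)
    (h : ((Cs N (m + 1) f : Matrix (Fin m) _ ℝ) * (Cs N (m + 1) f : Matrix (Fin m) _ ℝ)ᵀ).mulVec v
      = μ • v) :
    (∑ l, f l ^ 2) - 1 ≤ μ ∧ μ ≤ (∑ l, f l ^ 2) + 3 := by
  set C : Matrix (Fin m) (Fin (m + 1) × Fin (N + 1)) ℝ := Cs N (m + 1) f with hC
  set S := ∑ l, f l ^ 2 with hS
  let a : Fin (m + 1) → ℝ := Fin.snoc v 0
  let c : Fin (m + 1) → ℝ := Fin.cons 0 v
  have ha : ∑ b, a b ^ 2 = v ⬝ᵥ v := by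
    simp [a, Fin.sum_univ_castSucc, dotProduct, pow_two]
  have hc : ∑ b, c b ^ 2 = v ⬝ᵥ v := by
    simp [c, Fin.sum_univ_succ, dotProduct, pow_two]
  have hpos : 0 < v ⬝ᵥ v := by
    have h1 : v ⬝ᵥ v ≠ 0 := by simpa using hv
    have h2 : 0 ≤ v ⬝ᵥ v := Finset.sum_nonneg fun i _ => mul_self_nonneg _
    exact lt_of_le_of_ne h2 h1.symm
  have e1 : μ * (v ⬝ᵥ v) = ∑ q, (Cᵀ *ᵥ v) q ^ 2 := by
    have : v ⬝ᵥ ((C * Cᵀ) *ᵥ v) = v ⬝ᵥ (μ • v) := by rw [h]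
    rw [dotProduct_smul, ← Matrix.mulVec_mulVec, Matrix.dotProduct_mulVec,
      ← Matrix.mulVec_transpose] at this
    rw [← smul_eq_mul, ← this]
    simp [dotProduct, pow_two]
  have e2 : ∀ q, (Cᵀ *ᵥ v) q = f q.2 * a q.1 - (if q.2 = 0 then c q.1 else 0) := by
    intro q
    rw [← aux_col N m f hf0 v q.1 q.2]
    rfl
  have e3 : ∀ b, ∑ p, (f p * a b - (if p = 0 then c b else 0)) ^ 2 =
      (S - 1) * a b ^ 2 + (a b - c b) ^ 2 := by
    intro b
    rw [hS, Fin.sum_univ_succ, Fin.sum_univ_succ, hf0]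
    simp only [Fin.succ_ne_zero, if_false, if_true, sub_zero, mul_pow, ← Finset.sum_mul]
    ring
  have e4 : μ * (v ⬝ᵥ v) = (S - 1) * (v ⬝ᵥ v) + ∑ b, (a b - c b) ^ 2 := by
    rw [e1, Fintype.sum_prod_type]
    simp only [e2, e3]
    rw [Finset.sum_add_distrib, ← Finset.mul_sum, ha]
  have l1 : 0 ≤ ∑ b, (a b - c b) ^ 2 := Finset.sum_nonneg fun i _ => sq_nonneg _
  have l2 : ∑ b, (a b - c b) ^ 2 ≤ 4 * (v ⬝ᵥ v) := by
    calc ∑ b, (a b - c b) ^ 2 ≤ ∑ b, (2 * a b ^ 2 + 2 * c b ^ 2) :=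
          Finset.sum_le_sum fun b _ => by nlinarith [sq_nonneg (a b + c b)]
      _ = 4 * (v ⬝ᵥ v) := by
          rw [Finset.sum_add_distrib, ← Finset.mul_sum, ← Finset.mul_sum, ha, hc]
          ring
  constructor
  · refine le_of_mul_le_mul_right ?_ hpos
    linarith
  · refine le_of_mul_le_mul_right ?_ hpos
    linarith

theorem stmt14 (N n : ℕ) (hN : 1 ≤ N) (hn : 2 ≤ n)
    (f : Fin (N + 1) → ℝ) (hf0 : f 0 = 1)
    (hf : ∀ l : Fin (N + 1), l ≠ 0 → f l = 1 + (-1) ^ ((l : ℕ) + 1)) :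
    (∑ l, f l ^ 2) = (if Even N then 2 * (N : ℝ) + 1 else 2 * (N : ℝ) + 3) ∧
    (∀ (μ : ℝ) (v : Fin (n - 1) → ℝ), v ≠ 0 →
        (Cs N n f * (Cs N n f)ᵀ).mulVec v = μ • v →
        2 * (N : ℝ) ≤ μ ∧ μ ≤ 2 * (N : ℝ) + 6) := by
  have hsum : (∑ l, f l ^ 2) = (if Even N then 2 * (N : ℝ) + 1 else 2 * (N : ℝ) + 3) := by
    rw [← aux_sum N (fun l => if l = 0 then 1 else 1 + (-1) ^ (l + 1)) (by simp)
      (fun l hl => by simp [hl]), Finset.sum_range]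
    refine Finset.sum_congr rfl fun l _ => ?_
    by_cases hl : l = 0
    · simp [hl, hf0]
    · have : (l : ℕ) ≠ 0 := fun h => hl (Fin.ext h)
      simp [this, hf l hl]
  refine ⟨hsum, fun μ v hv h => ?_⟩
  obtain ⟨m, rfl⟩ : ∃ m, n = m + 1 := ⟨n - 1, by omega⟩
  have := aux_eig N m f hf0 v hv μ h
  rw [hsum] at this
  split_ifs at this
  · exact ⟨by linarith [this.1], by linarith [this.2]⟩
  · exact ⟨by linarith [this.1], by linarith [this.2]⟩
end
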